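/- Let K be an algebraically closed field with a nontrivial non-archimedean valuation v: K* → ℝ, valuation ring R, and residue field k of characteristic different from 2 and 3. If W and W' are two minimal integral Weierstrass models of the same elliptic curve E over K, then their reduced Weierstrass equations over k are related by an admissible change of variables over k with unit scaling factor; in particular the reduced curves W̄ and W̄' over k are isomorphic, so the reduced curve of a minimal model is independent of the choice of minimal model up to isomorphism. -/

import Mathlib

open WeierstrassCurve

/-- A Weierstrass model is *integral* with respect to the additive valuation `v` if all of its
coefficients have nonnegative valuation, i.e. lie in the valuation ring `R`. -/
def IsIntegralModel {K : Type*} [Field K] (v : AddValuation K (WithTop ℝ))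
    (W : WeierstrassCurve K) : Prop :=
  0 ≤ v W.a₁ ∧ 0 ≤ v W.a₂ ∧ 0 ≤ v W.a₃ ∧ 0 ≤ v W.a₄ ∧ 0 ≤ v W.a₆

/-- `W` is a Weierstrass model of (the elliptic curve defined by) `E` if it is obtained from `E`
by an admissible change of variables `x = u²x + r`, `y = u³y + u²sx + t`. -/
def IsModelOf {K : Type*} [Field K] (E W : WeierstrassCurve K) : Prop :=
  ∃ C : VariableChange K, W = C • E

/-- `W` is a *minimal integral Weierstrass model* of `E`: it is an integral model of `E` whose
discriminant has minimal valuation among all integral models of `E`. -/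
def IsMinimalModel {K : Type*} [Field K] (v : AddValuation K (WithTop ℝ))
    (E W : WeierstrassCurve K) : Prop :=
  IsModelOf E W ∧ IsIntegralModel v W ∧
    ∀ W' : WeierstrassCurve K, IsModelOf E W' → IsIntegralModel v W' → v W.Δ ≤ v W'.Δ

lemma aux_add {K : Type*} [Field K] (v : AddValuation K (WithTop ℝ)) {x y : K}
    (hx : 0 ≤ v x) (hy : 0 ≤ v y) : 0 ≤ v (x + y) :=
  le_trans (le_min hx hy) (v.map_add x y)

lemma aux_sub {K : Type*} [Field K] (v : AddValuation K (WithTop ℝ)) {x y : K}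
    (hx : 0 ≤ v x) (hy : 0 ≤ v y) : 0 ≤ v (x - y) :=
  le_trans (le_min hx hy) (v.map_sub x y)

lemma aux_mul {K : Type*} [Field K] (v : AddValuation K (WithTop ℝ)) {x y : K}
    (hx : 0 ≤ v x) (hy : 0 ≤ v y) : 0 ≤ v (x * y) := by
  rw [v.map_mul]; exact add_nonneg hx hy

lemma aux_cancel {K : Type*} [Field K] (v : AddValuation K (WithTop ℝ)) {c x : K}
    (hc : v c = 0) (hx : 0 ≤ v (c * x)) : 0 ≤ v x := by
  rwa [v.map_mul, hc, zero_add] at hx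

/-- Any two minimal integral Weierstrass models `W`, `W'` of the same
elliptic curve `E` over `K` are related by an admissible change of variables `(u, r, s, t)`
with `v u = 0` (unit scaling factor) and `r, s, t` in the valuation ring; reducing this change
of variables modulo the maximal ideal gives an admissible change of variables over the residue
field `k` with unit scaling factor relating the reduced Weierstrass equations, so the reduced
curves are isomorphic and the reduced curve of a minimal model is independent of the choice of
minimal model up to isomorphism. -/
theorem statement13 {K : Type*} [Field K] [IsAlgClosed K] (v : AddValuation K (WithTop ℝ))
    (hv : ∃ x : K, x ≠ 0 ∧ v x ≠ 0) (hv2 : v (2 : K) = 0) (hv3 : v (3 : K) = 0)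
    (E W W' : WeierstrassCurve K) (hΔ : E.Δ ≠ 0)
    (hW : IsMinimalModel v E W) (hW' : IsMinimalModel v E W') :
    ∃ C : VariableChange K, W' = C • W ∧
      v (C.u : K) = 0 ∧ 0 ≤ v C.r ∧ 0 ≤ v C.s ∧ 0 ≤ v C.t := by
  obtain ⟨⟨C₁, h₁⟩, ⟨i1, i2, i3, i4, i6⟩, m⟩ := hW
  obtain ⟨⟨C₂, h₂⟩, ⟨j1, j2, j3, j4, j6⟩, m'⟩ := hW'
  have hle := le_antisymm (m W' ⟨C₂, h₂⟩ ⟨j1, j2, j3, j4, j6⟩) (m' W ⟨C₁, h₁⟩ ⟨i1, i2, i3, i4, i6⟩)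
  have hWΔ : W.Δ ≠ 0 := by
    rw [h₁, variableChange_Δ]
    exact mul_ne_zero (pow_ne_zero _ (Units.ne_zero _)) hΔ
  have hC : W' = (C₂ * C₁⁻¹) • W := by rw [h₁, h₂, mul_smul, inv_smul_smul]
  generalize C₂ * C₁⁻¹ = C at hC
  refine ⟨C, hC, ?_⟩
  have hu0 : (C.u : K) ≠ 0 := C.u.ne_zero
  have eΔ : (C.u : K) ^ 12 * W'.Δ = W.Δ := by
    rw [hC, variableChange_Δ, Units.val_inv_eq_inv_val]; field_simp
  have e1 : (C.u : K) * W'.a₁ - W.a₁ = 2 * C.s := by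
    rw [hC, variableChange_a₁, Units.val_inv_eq_inv_val]; field_simp; ring
  have e2 : (C.u : K) * (C.u : K) * W'.a₂ - W.a₂ + C.s * W.a₁ + C.s * C.s = 3 * C.r := by
    rw [hC, variableChange_a₂, Units.val_inv_eq_inv_val]; field_simp; ring
  have e3 : (C.u : K) * (C.u : K) * (C.u : K) * W'.a₃ - W.a₃ - C.r * W.a₁ = 2 * C.t := by
    rw [hC, variableChange_a₃, Units.val_inv_eq_inv_val]; field_simp; ring
  have hu : v (C.u : K) = 0 := by
    have h := congrArg v eΔ
    rw [v.map_mul, v.map_pow, ← hle] at h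
    have t1 : v W.Δ ≠ ⊤ := fun h => hWΔ ((v.top_iff).1 h)
    have t2 : v (C.u : K) ≠ ⊤ := fun h => hu0 ((v.top_iff).1 h)
    lift v W.Δ to ℝ using t1 with d
    lift v (C.u : K) to ℝ using t2 with w
    norm_cast at h ⊢
    simpa using h
  have hs : 0 ≤ v C.s := aux_cancel v hv2 (e1 ▸ aux_sub v (aux_mul v hu.ge j1) i1)
  have hr : 0 ≤ v C.r := aux_cancel v hv3 (e2 ▸ aux_add v (aux_add v (aux_sub v
    (aux_mul v (aux_mul v hu.ge hu.ge) j2) i2) (aux_mul v hs i1)) (aux_mul v hs hs))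
  have ht : 0 ≤ v C.t := aux_cancel v hv2 (e3 ▸ aux_sub v (aux_sub v
    (aux_mul v (aux_mul v (aux_mul v hu.ge hu.ge) hu.ge) j3) i3) (aux_mul v hr i1))
  exact ⟨hu, hr, hs, ht⟩
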